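/- Let A be a unital star algebra over ℂ, n ≥ 1, and z : Fin n → A. Then the equality Σ_μ (z_μ ⊗ (z_μ)* − (z_μ)* ⊗ z_μ) = 0 holds in the tensor product A ⊗_ℂ A if and only if there exists a matrix Λ ∈ M_n(ℂ) which is unitary (Λ*Λ = 1) and symmetric (Λᵀ = Λ) such that (z_μ)* = Σ_ν Λ_{μν} · z_ν for every μ. -/

import Mathlib

open scoped TensorProduct

/-!
A functional `φ` is self-adjoint if `φ (a*) = conj (φ a)`. Evaluating the relation at `φ ⊗ ψ` says
that the vectors `(φ z_μ)_μ ∈ ℂⁿ`, for `φ` self-adjoint, have real pairwise inner products. An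
orthonormal basis of their real span is therefore orthonormal over `ℂ`; extended to an orthonormal
basis of `ℂⁿ`, it gives a unitary coordinate matrix `V` for which all these vectors have real
coordinates. On vectors `x` with `V x` real, the symmetric unitary matrix `Λ = Vᵀ V` acts as complex
conjugation, so `φ (z_μ*) = ∑ Λ_{μν} φ (z_ν)`. Self-adjoint functionals separate points.
-/

open Matrix

section TensorProduct

variable {R M N ι : Type*} [CommSemiring R] [AddCommMonoid M] [Module R M] [AddCommMonoid N]
  [Module R N] [Fintype ι]

lemma sum_tmul_comm_of_isSymm {Λ : Matrix ι ι R} (hΛ : Λ.IsSymm) {x y : ι → M}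
    (hy : ∀ μ, y μ = ∑ ν, Λ μ ν • x ν) : ∑ μ, x μ ⊗ₜ[R] y μ = ∑ μ, y μ ⊗ₜ[R] x μ := by
  simp only [hy, TensorProduct.tmul_sum, TensorProduct.sum_tmul, TensorProduct.tmul_smul,
    TensorProduct.smul_tmul']
  rw [Finset.sum_comm]
  exact Finset.sum_congr rfl fun ν _ ↦ Finset.sum_congr rfl fun μ _ ↦ by rw [hΛ.apply ν μ]

lemma sum_dual_mul_eq_of_sum_tmul_eq {x x' : ι → M} {y y' : ι → N}
    (h : ∑ μ, x μ ⊗ₜ[R] y μ = ∑ μ, x' μ ⊗ₜ[R] y' μ) (φ : Module.Dual R M) (ψ : Module.Dual R N) :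
    ∑ μ, φ (x μ) * ψ (y μ) = ∑ μ, φ (x' μ) * ψ (y' μ) := by
  simpa only [map_sum, TensorProduct.dualDistrib_apply] using
    congrArg (TensorProduct.dualDistrib R M N (φ ⊗ₜ ψ)) h

lemma isSelfAdjoint_star_dotProduct_of_sum_tmul_star_eq [StarRing R] [Star M] {z : ι → M}
    (hz : ∑ μ, z μ ⊗ₜ[R] star (z μ) = ∑ μ, star (z μ) ⊗ₜ[R] z μ) {φ ψ : Module.Dual R M}
    (hφ : ∀ a, φ (star a) = star (φ a)) (hψ : ∀ a, ψ (star a) = star (ψ a)) :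
    IsSelfAdjoint (star (φ ∘ z) ⬝ᵥ (ψ ∘ z)) := by
  have h := sum_dual_mul_eq_of_sum_tmul_eq hz φ ψ
  simp only [hφ, hψ] at h
  simpa [IsSelfAdjoint, dotProduct, mul_comm] using h

end TensorProduct

section InnerProductSpace

lemma isSelfAdjoint_inner_comm {𝕜 E : Type*} [RCLike 𝕜] [SeminormedAddCommGroup E]
    [InnerProductSpace 𝕜 E] {x y : E} :
    IsSelfAdjoint (inner 𝕜 x y) ↔ IsSelfAdjoint (inner 𝕜 y x) := by
  rw [← inner_conj_symm, starRingEnd_apply, IsSelfAdjoint.star_iff]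

variable {E : Type*} [NormedAddCommGroup E] [InnerProductSpace ℂ E] {s : Set E}

lemma isSelfAdjoint_inner_of_mem_span_real {x y : E} (hs : ∀ u ∈ s, IsSelfAdjoint (inner ℂ x u))
    (hy : y ∈ Submodule.span ℝ s) : IsSelfAdjoint (inner ℂ x y) := by
  induction hy using Submodule.span_induction with
  | mem u hu => exact hs u hu
  | zero => simp
  | add u v _ _ hu hv => simpa only [inner_add_right] using hu.add hv
  | smul r u _ hu => simpa only [inner_smul_right_eq_smul] using (IsSelfAdjoint.all r).smul hu

lemma isSelfAdjoint_inner_of_mem_span_real_of_mem_span_real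
    (hs : ∀ x ∈ s, ∀ y ∈ s, IsSelfAdjoint (inner ℂ x y)) {x y : E}
    (hx : x ∈ Submodule.span ℝ s) (hy : y ∈ Submodule.span ℝ s) : IsSelfAdjoint (inner ℂ x y) :=
  isSelfAdjoint_inner_of_mem_span_real (fun v hv ↦ isSelfAdjoint_inner_comm.1 <|
    isSelfAdjoint_inner_of_mem_span_real (hs v hv) hx) hy

lemma exists_orthonormal_span_real_eq [FiniteDimensional ℝ (Submodule.span ℝ s)]
    (hs : ∀ x ∈ s, ∀ y ∈ s, IsSelfAdjoint (inner ℂ x y)) :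
    ∃ t : Set E, Orthonormal ℂ ((↑) : t → E) ∧ Submodule.span ℝ t = Submodule.span ℝ s := by
  let : InnerProductSpace ℝ E := InnerProductSpace.complexToReal
  let w := stdOrthonormalBasis ℝ (Submodule.span ℝ s)
  refine ⟨Set.range fun i ↦ (w i : E), ?_, ?_⟩
  · refine Orthonormal.toSubtypeRange (orthonormal_iff_ite.2 fun i j ↦ ?_)
    have inner_re : (inner ℂ (w i : E) (w j)).re = if i = j then 1 else 0 :=
      orthonormal_iff_ite.1 w.orthonormal i j
    have inner_real := isSelfAdjoint_inner_of_mem_span_real_of_mem_span_real hs (w i).2 (w j).2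
    rw [← Complex.conj_eq_iff_re.1 inner_real, inner_re]
    split_ifs <;> simp
  · rw [show (fun i ↦ (w i : E)) = Submodule.subtype _ ∘ w from rfl, Set.range_comp,
      ← Submodule.map_span, ← w.coe_toBasis, w.toBasis.span_eq, Submodule.map_subtype_top]

lemma exists_orthonormalBasis_isSelfAdjoint_inner [FiniteDimensional ℂ E] {ι : Type*} [Fintype ι]
    (hι : Module.finrank ℂ E = Fintype.card ι)
    (hs : ∀ x ∈ s, ∀ y ∈ s, IsSelfAdjoint (inner ℂ x y)) :
    ∃ b : OrthonormalBasis ι ℂ E, ∀ x ∈ s, ∀ i, IsSelfAdjoint (inner ℂ (b i) x) := by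
  classical
  have : FiniteDimensional ℝ E := FiniteDimensional.complexToReal E
  obtain ⟨t, ht, ht_span⟩ := exists_orthonormal_span_real_eq hs
  obtain ⟨u, b, htu, hb⟩ := ht.exists_orthonormalBasis_extension
  have inner_real (v : u) (w : E) (hw : w ∈ t) : IsSelfAdjoint (inner ℂ (b v) w) := by
    rw [show w = b ⟨w, htu hw⟩ by rw [hb], b.inner_eq_ite]
    split_ifs <;> simp
  have hcard : Fintype.card u = Fintype.card ι := by
    rw [← hι, Module.finrank_eq_card_basis b.toBasis]
  refine ⟨b.reindex (Fintype.equivOfCardEq hcard), fun x hx i ↦ ?_⟩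
  rw [b.reindex_apply]
  exact isSelfAdjoint_inner_of_mem_span_real (inner_real _) (ht_span ▸ Submodule.subset_span hx)

end InnerProductSpace

section Matrix

variable {ι : Type*} [Fintype ι] [DecidableEq ι]

lemma transpose_mul_self_mulVec_eq_star {R : Type*} [CommRing R] [StarRing R]
    {V : Matrix ι ι R} (hV : V ∈ unitaryGroup ι R) {x : ι → R} (hx : IsSelfAdjoint (V *ᵥ x)) :
    (Vᵀ * V) *ᵥ x = star x := by
  calc (Vᵀ * V) *ᵥ x = Vᵀ *ᵥ star (V *ᵥ x) := by rw [hx.star_eq, mulVec_mulVec]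
    _ = star ((star V * V) *ᵥ x) := by
      rw [← mulVec_mulVec, star_mulVec (star V), star_eq_conjTranspose, conjTranspose_conjTranspose,
        mulVec_transpose]
    _ = star x := by rw [mem_unitaryGroup_iff'.1 hV, one_mulVec]

lemma exists_mem_unitaryGroup_isSelfAdjoint_mulVec {s : Set (ι → ℂ)}
    (hs : ∀ x ∈ s, ∀ y ∈ s, IsSelfAdjoint (star x ⬝ᵥ y)) :
    ∃ V ∈ unitaryGroup ι ℂ, ∀ x ∈ s, IsSelfAdjoint (V *ᵥ x) := by
  obtain ⟨b, hb⟩ := exists_orthonormalBasis_isSelfAdjoint_inner (E := EuclideanSpace ℂ ι)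
    (s := WithLp.ofLp ⁻¹' s) finrank_euclideanSpace fun x hx y hy ↦ by
      simpa only [EuclideanSpace.inner_eq_star_dotProduct, dotProduct_comm] using hs _ hx _ hy
  let e := EuclideanSpace.basisFun ι ℂ
  refine ⟨b.toBasis.toMatrix e, b.toMatrix_orthonormalBasis_mem_unitary e, fun x hx ↦ ?_⟩
  have mulVec_eq_repr : b.toBasis.toMatrix e *ᵥ x = b.repr (WithLp.toLp 2 x) := by
    simpa only [e.coe_toBasis] using! e.toBasis.toMatrix_mulVec_repr b.toBasis (WithLp.toLp 2 x)
  rw [mulVec_eq_repr]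
  funext i
  rw [Pi.star_apply, b.repr_apply_apply]
  exact hb (WithLp.toLp 2 x) hx i

lemma exists_mem_unitaryGroup_isSymm_mulVec_eq_star {s : Set (ι → ℂ)}
    (hs : ∀ x ∈ s, ∀ y ∈ s, IsSelfAdjoint (star x ⬝ᵥ y)) :
    ∃ Λ ∈ unitaryGroup ι ℂ, Λ.IsSymm ∧ ∀ x ∈ s, Λ *ᵥ x = star x := by
  obtain ⟨V, hV, hVs⟩ := exists_mem_unitaryGroup_isSelfAdjoint_mulVec hs
  exact ⟨Vᵀ * V, mul_mem (transpose_mem_unitaryGroup_iff.2 hV) hV, isSymm_transpose_mul_self V,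
    fun x hx ↦ transpose_mul_self_mulVec_eq_star hV (hVs x hx)⟩

end Matrix

section StarModule

variable {A : Type*} [AddCommGroup A] [Module ℂ A] [StarAddMonoid A] [StarModule ℂ A]

lemma eq_zero_of_forall_map_star_dual_apply_eq_zero {a : A}
    (ha : ∀ φ : Module.Dual ℂ A, (∀ b, φ (star b) = star (φ b)) → φ a = 0) : a = 0 := by
  rw [← Module.forall_dual_apply_eq_zero_iff ℂ]
  intro φ
  -- Self-adjoint functionals are those for the intrinsic star, which Mathlib puts on `WithConv`.
  have eval_eq_zero : Module.Dual.eval ℂ A a ∘ₗ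
      (WithConv.linearEquiv ℂ (Module.Dual ℂ A)).toLinearMap = 0 :=
    LinearMap.ext_on span_selfAdjoint fun ψ hψ ↦
      ha ψ.ofConv ((LinearMap.IntrinsicStar.isSelfAdjoint_iff_map_star ψ).1 hψ)
  exact LinearMap.congr_fun eval_eq_zero (WithConv.toConv φ)

theorem stmt_1_general {ι : Type*} [Fintype ι] [DecidableEq ι] (z : ι → A) :
    (∑ μ, (z μ ⊗ₜ[ℂ] star (z μ) - star (z μ) ⊗ₜ[ℂ] z μ)) = (0 : A ⊗[ℂ] A) ↔
      ∃ Λ : Matrix ι ι ℂ,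
        Λ.conjTranspose * Λ = 1 ∧ Λ.transpose = Λ ∧
          ∀ μ, star (z μ) = ∑ ν, Λ μ ν • z ν := by
  rw [Finset.sum_sub_distrib, sub_eq_zero]
  refine ⟨fun hz ↦ ?_, fun ⟨Λ, _, hsymm, hΛ⟩ ↦ sum_tmul_comm_of_isSymm hsymm hΛ⟩
  obtain ⟨Λ, hunitary, hsymm, hΛ⟩ := exists_mem_unitaryGroup_isSymm_mulVec_eq_star
    (s := {x | ∃ φ : Module.Dual ℂ A, (∀ a, φ (star a) = star (φ a)) ∧ φ ∘ z = x}) (by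
      rintro _ ⟨φ, hφ, rfl⟩ _ ⟨ψ, hψ, rfl⟩
      exact isSelfAdjoint_star_dotProduct_of_sum_tmul_star_eq hz hφ hψ)
  refine ⟨Λ, mem_unitaryGroup_iff'.1 hunitary, hsymm, fun μ ↦ sub_eq_zero.1 <|
    eq_zero_of_forall_map_star_dual_apply_eq_zero fun φ hφ ↦ ?_⟩
  have mulVec_eq : ∑ ν, Λ μ ν * φ (z ν) = star (φ (z μ)) := congrFun (hΛ _ ⟨φ, hφ, rfl⟩) μ
  simp only [map_sub, map_sum, map_smul, smul_eq_mul, hφ, mulVec_eq, sub_self]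

end StarModule

/-- The relation `∑ (z_μ ⊗ z_μ* − z_μ* ⊗ z_μ) = 0` in `A ⊗_ℂ A` holds iff there
is a symmetric unitary matrix `Λ` with `z_μ* = ∑ Λ_{μν} • z_ν`. -/
theorem stmt_1 {A : Type*} [Ring A] [Algebra ℂ A] [StarRing A] [StarModule ℂ A]
    (n : ℕ) (hn : 1 ≤ n) (z : Fin n → A) :
    (∑ μ, (z μ ⊗ₜ[ℂ] star (z μ) - star (z μ) ⊗ₜ[ℂ] z μ)) = (0 : A ⊗[ℂ] A) ↔
      ∃ Λ : Matrix (Fin n) (Fin n) ℂ,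
        Λ.conjTranspose * Λ = 1 ∧ Λ.transpose = Λ ∧
          ∀ μ, star (z μ) = ∑ ν, Λ μ ν • z ν :=
  stmt_1_general z
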